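/- Let k be a field of characteristic 0, let 1 ≤ t ≤ m ≤ n, and let D ≥ 2. If J_t(m, m+t) is generated in degrees ≤ D, then J_t(m,n) is generated in degrees ≤ D. In particular, the maximal degree of a minimal generator of J_t(m,n) is at most the maximal degree of a minimal generator of J_t(m, m+t). -/

import Mathlib

open MvPolynomial

/-- The `t`-minor `[I|J]` of the generic `m × n` matrix. -/
noncomputable def genericMinor (k : Type*) [CommRing k] (m n t : ℕ)
    (I : Finset (Fin m)) (J : Finset (Fin n)) (hI : I.card = t) (hJ : J.card = t) :
    MvPolynomial (Fin m × Fin n) k :=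
  Matrix.det (Matrix.of fun a b : Fin t =>
    MvPolynomial.X ((↑(I.orderIsoOfFin hI a) : Fin m), (↑(J.orderIsoOfFin hJ b) : Fin n)))

/-- Index set for the `t`-minors of an `m × n` matrix: pairs `(I, J)` of a `t`-element set
of rows and a `t`-element set of columns. -/
def MinorIndex (t m n : ℕ) : Type :=
  {p : Finset (Fin m) × Finset (Fin n) // p.1.card = t ∧ p.2.card = t}

/-- The presentation map `π : S_t(m,n) → R(m,n)`, sending the indeterminate `y_{I,J}`
to the `t`-minor `[I|J]`. -/
noncomputable def minorPresentation (k : Type*) [CommRing k] (t m n : ℕ) :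
    MvPolynomial (MinorIndex t m n) k →ₐ[k] MvPolynomial (Fin m × Fin n) k :=
  MvPolynomial.aeval fun p => genericMinor k m n t p.1.1 p.1.2 p.2.1 p.2.2

/-- `J_t(m,n)`: the ideal of relations of the `t`-minors of the generic `m × n` matrix. -/
noncomputable def minorRelations (k : Type*) [CommRing k] (t m n : ℕ) :
    Ideal (MvPolynomial (MinorIndex t m n) k) :=
  RingHom.ker (minorPresentation k t m n).toRingHom

/-- An ideal of a polynomial ring is generated in degrees `≤ D` if it is generated by its
elements of total degree at most `D`. -/
def GeneratedInDegreesLE {k σ : Type*} [CommRing k]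
    (I : Ideal (MvPolynomial σ k)) (D : ℕ) : Prop :=
  I = Ideal.span {x | x ∈ I ∧ x.totalDegree ≤ D}

/-!
A relation `f` of degree `d` can be corrected, modulo relations coming from `m + t` columns, to
one all of whose partial derivatives are again relations; by Euler's identity and induction on `d`
this suffices.

The partial derivatives of `f` are tested through its polarizations: forms in the entries of the
generic matrix extended by `t` new rows, which vanish only if the partial derivatives are relations
(specialize the new rows to rows of the identity matrix). Polarization is compatible with the
column substitutions `X ↦ X φ`. A form of fixed degree `q` in the entries of a matrix `X` with
`m + t` rows is a fixed rational linear combination of its images under the substitutions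
`X ↦ X φ₁ φ₂` where `φ₁ φ₂` factors through `m + t` columns. Subtracting from `f` the same
combination of its images under these substitutions, which all come from relations among the minors
of `m + t` columns, kills all polarizations.

The combination exists because the scalar products `⟨φ, Zᵀ Y⟩ ^ q`, for matrices `Z`, `Y` with
`m + t` rows, only involve matrices `Zᵀ Y` factoring through `m + t` columns: the orthogonal
projection of the `q`-th tensor power of the identity matrix onto the span of the `q`-th tensor
powers of such matrices has the same scalar products with them. Since `⟨φ, Zᵀ Y⟩ = ⟨Z φ, Y⟩`, and
powers of linear forms determine the values of all forms of degree `q`, this gives the reproducing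
property.
-/

open Matrix Set.powersetCard

theorem alternatingMap_apply_eq_sum_det_smul {R M N ν : Type*} [CommRing R] [AddCommGroup M]
    [Module R M] [AddCommGroup N] [Module R N] [Fintype ν] [LinearOrder ν] {t : ℕ}
    (b : Module.Basis ν R M) (f : M [⋀^Fin t]→ₗ[R] N) (v : Fin t → M) :
    f v = ∑ K : Set.powersetCard ν t,
      (of fun i j => b.coord (ofFinEmbEquiv.symm K j) (v i)).det •
        f (b ∘ ofFinEmbEquiv.symm K) := by
  conv_lhs =>
    rw [← exteriorPower.alternatingMapLinearEquiv_apply_ιMulti f v,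
      ← (b.exteriorPower t).sum_repr (exteriorPower.ιMulti R t v), map_sum]
  simp only [map_smul, exteriorPower.basis_repr_apply, exteriorPower.ιMultiDual_apply_ιMulti,
    exteriorPower.coe_basis, exteriorPower.ιMulti_family,
    exteriorPower.alternatingMapLinearEquiv_apply_ιMulti]

section RowMinor

variable {ρ ν μ R S : Type*} [CommRing R] [CommRing S] [LinearOrder ν] [LinearOrder μ] {t : ℕ}

/-- The `t`-minor of `A` on the rows `r 0, …, r (t - 1)`, in this order, and on the columns in `J`,
in increasing order. -/
noncomputable def rowMinor (A : Matrix ρ ν R) (r : Fin t → ρ) (J : Set.powersetCard ν t) : R :=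
  (A.submatrix r (ofFinEmbEquiv.symm J)).det

theorem map_rowMinor (f : R →+* S) (A : Matrix ρ ν R) (r : Fin t → ρ)
    (J : Set.powersetCard ν t) : f (rowMinor A r J) = rowMinor (A.map f) r J :=
  RingHom.map_det f _

theorem rowMinor_one [DecidableEq ν] [Finite ν] (I J : Set.powersetCard ν t) :
    rowMinor (1 : Matrix ν ν R) (ofFinEmbEquiv.symm I) J = if I = J then 1 else 0 := by
  have eq_dual : rowMinor (1 : Matrix ν ν R) (ofFinEmbEquiv.symm I) J =
      exteriorPower.ιMultiDual R t (Pi.basisFun R ν) J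
        (exteriorPower.ιMulti_family R t (Pi.basisFun R ν) I) := by
    rw [exteriorPower.ιMulti_family, exteriorPower.ιMultiDual_apply_ιMulti, rowMinor]
    congr 1
    ext i j
    simp [one_apply, Pi.single_apply, eq_comm]
  split_ifs with h
  · rw [eq_dual, h, exteriorPower.ιMultiDual_apply_diag]
  · rw [eq_dual, exteriorPower.ιMultiDual_apply_nondiag _ _ _ _ _ (Ne.symm h)]

/-- The Cauchy–Binet formula, by expanding `det (v B_J)`, as an alternating map of the rows of `v`,
in the standard basis. -/
theorem rowMinor_mul [Fintype μ] (A : Matrix ρ μ R) (B : Matrix μ ν R) (r : Fin t → ρ)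
    (J : Set.powersetCard ν t) :
    rowMinor (A * B) r J =
      ∑ K : Set.powersetCard μ t, rowMinor A r K * rowMinor B (ofFinEmbEquiv.symm K) J := by
  let B_J : Matrix μ (Fin t) R := B.submatrix id (ofFinEmbEquiv.symm J)
  let f : (μ → R) [⋀^Fin t]→ₗ[R] R := detRowAlternating.compLinearMap B_J.vecMulLinear
  calc
    rowMinor (A * B) r J = f fun i => A (r i) := rfl
    _ = _ := alternatingMap_apply_eq_sum_det_smul (Pi.basisFun R μ) f fun i => A (r i)
    _ = _ := Finset.sum_congr rfl fun K _ => by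
      rw [smul_eq_mul]
      congr 1
      refine congrArg det (Matrix.ext fun i j => ?_)
      simp [B_J]

theorem isHomogeneous_rowMinor_mvPolynomialX (r : Fin t → ρ) (J : Set.powersetCard ν t) :
    (rowMinor (mvPolynomialX ρ ν R) r J).IsHomogeneous t := by
  rw [rowMinor, det_apply]
  refine IsHomogeneous.sum _ _ _ fun s _ => ?_
  have prod_hom := IsHomogeneous.prod Finset.univ
    (fun i => mvPolynomialX ρ ν R (r (s i)) (ofFinEmbEquiv.symm J i)) (fun _ => 1)
    fun i _ => isHomogeneous_X R _
  simp only [Finset.sum_const, Finset.card_univ, Fintype.card_fin, smul_eq_mul, mul_one] at prod_hom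
  exact (homogeneousSubmodule _ R t).smul_of_tower_mem (Equiv.Perm.sign s) prod_hom

end RowMinor

section ReproducingCombination

variable {K : Type*} [Field K] [LinearOrder K] [IsStrictOrderedRing K]

theorem exists_mem_forall_dotProduct_eq {σ : Type*} [Fintype σ] (U : Submodule K (σ → K))
    (w : σ → K) : ∃ u ∈ U, ∀ v ∈ U, v ⬝ᵥ u = v ⬝ᵥ w := by
  let B : LinearMap.BilinForm K (σ → K) := dotProductBilin K K
  have isRefl : B.IsRefl := fun x y hxy => (dotProduct_comm y x).trans hxy
  have disjoint : Disjoint U (B.orthogonal U) :=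
    Submodule.disjoint_def.2 fun u hu hu' => dotProduct_self_eq_zero.1 (hu' u hu)
  have isCompl := (LinearMap.BilinForm.isCompl_orthogonal_iff_disjoint isRefl).2 disjoint
  obtain ⟨u, hu, u', hu', rfl⟩ :=
    Submodule.mem_sup.1 (isCompl.sup_eq_top ▸ Submodule.mem_top : w ∈ U ⊔ B.orthogonal U)
  refine ⟨u, hu, fun v hv => ?_⟩
  rw [dotProduct_add, show v ⬝ᵥ u' = 0 from hu' v hv, add_zero]

theorem exists_finsupp_sum_dotProduct_pow {ι σ : Type*} [Fintype σ] (v : ι → σ → K)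
    (w : σ → K) (q : ℕ) :
    ∃ c : ι →₀ K, ∀ i, c.sum (fun j r => r * (v i ⬝ᵥ v j) ^ q) = (v i ⬝ᵥ w) ^ q := by
  let tensorPow (u : σ → K) : (Fin q → σ) → K := fun s => ∏ a, u (s a)
  have dotProduct_tensorPow (u u' : σ → K) :
      tensorPow u ⬝ᵥ tensorPow u' = (u ⬝ᵥ u') ^ q := by
    simp only [dotProduct, tensorPow, Fintype.sum_pow, Finset.prod_mul_distrib]
  obtain ⟨u, hu, hv⟩ := exists_mem_forall_dotProduct_eq
    (Submodule.span K (Set.range fun i => tensorPow (v i))) (tensorPow w)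
  obtain ⟨c, rfl⟩ := Finsupp.mem_span_range_iff_exists_finsupp.1 hu
  refine ⟨c, fun i => ?_⟩
  rw [← dotProduct_tensorPow, ← hv _ (Submodule.subset_span ⟨i, rfl⟩)]
  simp only [Finsupp.sum, dotProduct_sum, dotProduct_smul, dotProduct_tensorPow, smul_eq_mul]

end ReproducingCombination

theorem sum_mul_eval_eq_eval_of_sum_mul_dotProduct_pow {K ι σ : Type*} [CommRing K] [IsDomain K]
    [CharZero K] [Fintype σ] {q : ℕ} {c : ι →₀ K} {v : ι → σ → K} {w : σ → K}
    (h : ∀ y, c.sum (fun i r => r * (v i ⬝ᵥ y) ^ q) = (w ⬝ᵥ y) ^ q)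
    {P : MvPolynomial σ K} (hP : P.IsHomogeneous q) :
    c.sum (fun i r => r * eval (v i) P) = eval w P := by
  have linearForm_pow : c.sum (fun i r => r • (∑ j, v i j • X j : MvPolynomial σ K) ^ q) =
      (∑ j, w j • X j) ^ q := by
    have := CharZero.infinite K
    refine MvPolynomial.funext fun y => ?_
    simpa [Finsupp.sum, smul_eval, dotProduct] using h y
  have prod_pow_eq (s : σ →₀ ℕ) (hs : s.degree = q) :
      c.sum (fun i r => r * s.prod fun j a => v i j ^ a) = s.prod fun j a => w j ^ a := by
    have multinomial_ne_zero : (s.multinomial : K) ≠ 0 := by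
      rw [Finsupp.multinomial_eq]
      exact_mod_cast (Nat.multinomial_pos _ _).ne'
    have hs' : (s.sum fun _ a => a) = q := hs
    have coeff_pow := congrArg (coeff s) linearForm_pow
    simp only [Finsupp.sum, coeff_sum, coeff_smul, smul_eq_mul,
      coeff_linearCombination_X_pow_of_fintype] at coeff_pow hs' ⊢
    simp only [if_pos hs', mul_left_comm _ (s.multinomial : K), ← Finset.mul_sum] at coeff_pow
    exact mul_left_cancel₀ multinomial_ne_zero coeff_pow
  simp only [eval_eq, Finsupp.sum, Finset.mul_sum]
  rw [Finset.sum_comm]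
  refine Finset.sum_congr rfl fun s hs => ?_
  simp only [mul_left_comm _ (coeff s P), ← Finset.mul_sum]
  congr 1
  exact prod_pow_eq s (by_contra fun h => mem_support_iff.1 hs (hP.coeff_eq_zero h))

section ColumnSubst

variable {ν ν' R S : Type*} [Fintype ν'] [CommRing R] [CommRing S]

/-- The substitution `X ↦ X φ` in the entries of a generic matrix `X` with rows indexed by `ρ`. -/
noncomputable def columnSubst (ρ : Type*) (φ : Matrix ν' ν R) :
    MvPolynomial (ρ × ν) R →ₐ[R] MvPolynomial (ρ × ν') R :=
  aeval fun x => ∑ j, X (x.1, j) * C (φ j x.2)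

variable {ρ : Type*} (φ : Matrix ν' ν R)

theorem map_columnSubst_mvPolynomialX :
    (mvPolynomialX ρ ν R).map (columnSubst ρ φ) =
      mvPolynomialX ρ ν' R * φ.map (C (σ := ρ × ν')) := by
  ext1 i j
  exact aeval_X _ _

theorem eval_columnSubst (Z : Matrix ρ ν' R) (P : MvPolynomial (ρ × ν) R) :
    eval (fun x => Z x.1 x.2) (columnSubst ρ φ P) = eval (fun x => (Z * φ) x.1 x.2) P := by
  refine RingHom.congr_fun (f := (eval _).comp (columnSubst ρ φ).toRingHom) ?_ P
  ext x
  · simp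
  · simp [columnSubst, Matrix.mul_apply]

theorem columnSubst_map (f : R →+* S) (P : MvPolynomial (ρ × ν) R) :
    columnSubst ρ (φ.map f) (map f P) = map f (columnSubst ρ φ P) := by
  refine RingHom.congr_fun (f := (columnSubst ρ (φ.map f)).toRingHom.comp (map f))
    (g := (map f).comp (columnSubst ρ φ).toRingHom) ?_ P
  ext x
  · simp
  · simp [columnSubst]

theorem columnSubst_rename_rows {ρ' : Type*} (e : ρ → ρ') (P : MvPolynomial (ρ × ν) R) :
    columnSubst ρ' φ (rename (Prod.map e id) P) = rename (Prod.map e id) (columnSubst ρ φ P) := by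
  refine AlgHom.congr_fun (φ₁ := (columnSubst ρ' φ).comp (rename (Prod.map e id)))
    (φ₂ := (rename (Prod.map e id)).comp (columnSubst ρ φ)) ?_ P
  ext1 x
  simp [columnSubst]

theorem columnSubst_rowMinor [LinearOrder ν] [LinearOrder ν'] {t : ℕ} (r : Fin t → ρ)
    (J : Set.powersetCard ν t) :
    columnSubst ρ φ (rowMinor (mvPolynomialX ρ ν R) r J) =
      ∑ K : Set.powersetCard ν' t,
        C (rowMinor φ (ofFinEmbEquiv.symm K) J) * rowMinor (mvPolynomialX ρ ν' R) r K := by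
  calc
    _ = rowMinor ((mvPolynomialX ρ ν R).map (columnSubst ρ φ)) r J :=
      map_rowMinor (columnSubst ρ φ).toRingHom _ r J
    _ = _ := by
      rw [map_columnSubst_mvPolynomialX, rowMinor_mul]
      simp only [map_rowMinor, mul_comm]

end ColumnSubst

section Factoring

variable {K ρ ν κ : Type*} [Field K] [LinearOrder K] [IsStrictOrderedRing K]
  [Fintype ν] [Fintype κ]

theorem exists_finsupp_sum_eval_mul (e : ρ ≃ κ) (q : ℕ) :
    ∃ c : (Matrix ν κ K × Matrix κ ν K) →₀ K,
      ∀ P : MvPolynomial (ρ × ν) K, P.IsHomogeneous q → ∀ Z : Matrix ρ ν K,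
        c.sum (fun φ r => r * eval (fun x => (Z * φ.1 * φ.2) x.1 x.2) P) =
          eval (fun x => Z x.1 x.2) P := by
  classical
  have := Fintype.ofEquiv κ e.symm
  obtain ⟨c, hc⟩ := exists_finsupp_sum_dotProduct_pow
    (fun φ : Matrix ν κ K × Matrix κ ν K => (φ.1 * φ.2).vec) (1 : Matrix ν ν K).vec q
  refine ⟨c, fun P hP Z => ?_⟩
  refine sum_mul_eval_eq_eval_of_sum_mul_dotProduct_pow (fun y => ?_) hP
  let Y : Matrix ρ ν K := of fun i j => y (i, j)
  have adjoint (M : Matrix ν ν K) :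
      (fun x : ρ × ν => (Z * M) x.1 x.2) ⬝ᵥ y = (Zᵀ * Y).vec ⬝ᵥ M.vec := by
    calc
      _ = (Z * M)ᵀ.vec ⬝ᵥ Yᵀ.vec := rfl
      _ = ((Z * M) * Yᵀ).trace := by rw [vec_dotProduct_vec, transpose_transpose]
      _ = (Yᵀ * Z * M).trace := by rw [trace_mul_comm, Matrix.mul_assoc]
      _ = (Zᵀ * Y).vec ⬝ᵥ M.vec := by
        rw [vec_dotProduct_vec, transpose_mul, transpose_transpose]
  have factor : Zᵀ * Y = Zᵀ.submatrix id e.symm * Y.submatrix e.symm id := by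
    rw [submatrix_mul_equiv, submatrix_id_id]
  have reproduced := hc (Zᵀ.submatrix id e.symm, Y.submatrix e.symm id)
  simp only [← factor, ← adjoint, ← Matrix.mul_assoc, Matrix.mul_one] at reproduced
  exact reproduced

theorem exists_finsupp_sum_smul_columnSubst (R : Type*) [CommRing R] [Algebra K R]
    (e : ρ ≃ κ) (q : ℕ) :
    ∃ c : (Matrix ν κ K × Matrix κ ν K) →₀ K,
      ∀ P : MvPolynomial (ρ × ν) R, P.IsHomogeneous q →
        c.sum (fun φ r => r • columnSubst ρ (φ.1.map (algebraMap K R))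
          (columnSubst ρ (φ.2.map (algebraMap K R)) P)) = P := by
  obtain ⟨c, hc⟩ := exists_finsupp_sum_eval_mul (K := K) (ν := ν) e q
  refine ⟨c, fun P hP => ?_⟩
  have over_K (Q : MvPolynomial (ρ × ν) K) (hQ : Q.IsHomogeneous q) :
      c.sum (fun φ r => r • columnSubst ρ φ.1 (columnSubst ρ φ.2 Q)) = Q := by
    have := CharZero.infinite K
    refine MvPolynomial.funext fun z => ?_
    have := hc Q hQ (of fun i j => z (i, j))
    simp only [← eval_columnSubst] at this
    simp only [Finsupp.sum, map_sum, smul_eval]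
    exact this
  have on_monomial (s : ρ × ν →₀ ℕ) (hs : s.degree = q) :
      c.sum (fun φ r => r • columnSubst ρ (φ.1.map (algebraMap K R))
          (columnSubst ρ (φ.2.map (algebraMap K R)) (monomial s 1))) = monomial s 1 := by
    have := congrArg (mapAlgHom (Algebra.ofId K R))
      (over_K (monomial s 1) (isHomogeneous_monomial 1 hs))
    simpa [Finsupp.sum, ← columnSubst_map, map_smul] using this
  rw [P.as_sum]
  simp only [Finsupp.sum, map_sum, Finset.smul_sum]
  rw [Finset.sum_comm]
  refine Finset.sum_congr rfl fun s hs => ?_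
  have monomial_eq : monomial s (coeff s P) = coeff s P • monomial s (1 : R) := by
    rw [smul_monomial, smul_eq_mul, mul_one]
  simp only [monomial_eq, map_smul, smul_comm _ (coeff s P), ← Finset.smul_sum]
  congr 1
  exact on_monomial s (by_contra fun h => mem_support_iff.1 hs (hP.coeff_eq_zero h))

end Factoring

section Grading

variable {σ τ R : Type*} [CommRing R]

theorem totalDegree_aeval_le {v : σ → MvPolynomial τ R} {e : ℕ} (hv : ∀ i, (v i).totalDegree ≤ e)
    (f : MvPolynomial σ R) : (aeval v f).totalDegree ≤ f.totalDegree * e := by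
  rw [aeval_def, eval₂_eq]
  refine totalDegree_finsetSum_le fun s hs => ?_
  calc
    _ ≤ (∏ i ∈ s.support, v i ^ s i).totalDegree := by
      rw [algebraMap_eq, ← smul_eq_C_mul]
      exact totalDegree_smul_le _ _
    _ ≤ ∑ i ∈ s.support, s i * e := (totalDegree_finsetProd _ _).trans <|
      Finset.sum_le_sum fun i _ => (totalDegree_pow _ _).trans (Nat.mul_le_mul_left _ (hv i))
    _ ≤ f.totalDegree * e := by
      rw [← Finset.sum_mul]
      exact Nat.mul_le_mul_right _ (le_totalDegree hs)

theorem homogeneousComponent_aeval {v : σ → MvPolynomial τ R} {e : ℕ} (he : e ≠ 0)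
    (hv : ∀ i, (v i).IsHomogeneous e) (d : ℕ) (f : MvPolynomial σ R) :
    homogeneousComponent (e * d) (aeval v f) = aeval v (homogeneousComponent d f) := by
  have on_homogeneous (i : ℕ) : homogeneousComponent (e * d) (aeval v (homogeneousComponent i f)) =
      if i = d then aeval v (homogeneousComponent i f) else 0 := by
    rw [homogeneousComponent_of_mem ((homogeneousComponent_isHomogeneous i f).aeval v hv)]
    simp only [mul_right_inj' he, eq_comm]
  conv_lhs => rw [← sum_homogeneousComponent f, map_sum, map_sum]
  simp only [on_homogeneous, Finset.sum_ite_eq', Finset.mem_range, Order.lt_add_one_iff]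
  split_ifs with hd
  · rfl
  · rw [homogeneousComponent_eq_zero _ _ (not_le.1 hd), map_zero]

theorem mem_of_forall_pderiv_mem [Algebra ℚ R] [Finite σ] {I : Ideal (MvPolynomial σ R)} {d : ℕ}
    (hd : d ≠ 0) {f : MvPolynomial σ R} (hf : f.IsHomogeneous d) (h : ∀ i, pderiv i f ∈ I) :
    f ∈ I := by
  cases nonempty_fintype σ
  have nsmul_mem : d • f ∈ I := by
    rw [← hf.sum_X_mul_pderiv]
    exact I.sum_mem fun i _ => I.mul_mem_left _ (h i)
  have := Submodule.smul_of_tower_mem I (d : ℚ)⁻¹ nsmul_mem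
  rwa [← Nat.cast_smul_eq_nsmul ℚ, inv_smul_smul₀ (by exact_mod_cast hd)] at this

end Grading

namespace MinorIndex

variable {t m n : ℕ}

/-- The index of the minor `[I|J]`. -/
def ofSets (I : Set.powersetCard (Fin m) t) (J : Set.powersetCard (Fin n) t) :
    MinorIndex t m n :=
  ⟨(I, J), I.2, J.2⟩

/-- The row set `I` of the minor `[I|J]`. -/
def rows (p : MinorIndex t m n) : Set.powersetCard (Fin m) t := ⟨p.1.1, p.2.1⟩

/-- The column set `J` of the minor `[I|J]`. -/
def cols (p : MinorIndex t m n) : Set.powersetCard (Fin n) t := ⟨p.1.2, p.2.2⟩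

@[simp]
theorem rows_ofSets (I : Set.powersetCard (Fin m) t) (J : Set.powersetCard (Fin n) t) :
    (ofSets I J).rows = I :=
  rfl

@[simp]
theorem cols_ofSets (I : Set.powersetCard (Fin m) t) (J : Set.powersetCard (Fin n) t) :
    (ofSets I J).cols = J :=
  rfl

theorem eq_ofSets_iff {p : MinorIndex t m n} {I : Set.powersetCard (Fin m) t}
    {J : Set.powersetCard (Fin n) t} : p = ofSets I J ↔ p.rows = I ∧ p.cols = J :=
  ⟨by rintro rfl; exact ⟨rfl, rfl⟩, by rintro ⟨rfl, rfl⟩; rfl⟩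

instance : Finite (MinorIndex t m n) := inferInstanceAs (Finite {_p : Finset _ × Finset _ // _})

end MinorIndex

section MinorPresentation

variable {k : Type*} [CommRing k] {t m n n' : ℕ}

theorem minorPresentation_X (p : MinorIndex t m n) :
    minorPresentation k t m n (X p) =
      rowMinor (mvPolynomialX (Fin m) (Fin n) k) (ofFinEmbEquiv.symm p.rows) p.cols :=
  aeval_X _ _

theorem isHomogeneous_minorPresentation_X (p : MinorIndex t m n) :
    (minorPresentation k t m n (X p)).IsHomogeneous t := by
  rw [minorPresentation_X]
  exact isHomogeneous_rowMinor_mvPolynomialX _ _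

theorem isHomogeneous_minorPresentation {f : MvPolynomial (MinorIndex t m n) k} {d : ℕ}
    (hf : f.IsHomogeneous d) : (minorPresentation k t m n f).IsHomogeneous (t * d) := by
  rw [aeval_unique (minorPresentation k t m n)]
  exact hf.aeval _ isHomogeneous_minorPresentation_X

theorem mem_minorRelations {f : MvPolynomial (MinorIndex t m n) k} :
    f ∈ minorRelations k t m n ↔ minorPresentation k t m n f = 0 :=
  Iff.rfl

theorem homogeneousComponent_minorPresentation (ht : t ≠ 0) (d : ℕ)
    (f : MvPolynomial (MinorIndex t m n) k) :
    homogeneousComponent (t * d) (minorPresentation k t m n f) =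
      minorPresentation k t m n (homogeneousComponent d f) := by
  rw [aeval_unique (minorPresentation k t m n)]
  exact homogeneousComponent_aeval ht isHomogeneous_minorPresentation_X d f

theorem homogeneousComponent_mem_minorRelations (ht : t ≠ 0)
    {f : MvPolynomial (MinorIndex t m n) k} (hf : f ∈ minorRelations k t m n) (d : ℕ) :
    homogeneousComponent d f ∈ minorRelations k t m n := by
  rw [mem_minorRelations] at hf ⊢
  rw [← homogeneousComponent_minorPresentation ht, hf, map_zero]

/-- The lift of the column substitution `X ↦ X φ` to the indeterminates `y_{I,J}`: it sends
`y_{I,J}` to the linear form in the `y_{I,K}` given by the Cauchy–Binet expansion of the minor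
`[I|J]` of `X φ`. -/
noncomputable def minorSubst (t m : ℕ) (φ : Matrix (Fin n') (Fin n) k) :
    MvPolynomial (MinorIndex t m n) k →ₐ[k] MvPolynomial (MinorIndex t m n') k :=
  aeval fun p => ∑ K : Set.powersetCard (Fin n') t,
    C (rowMinor φ (ofFinEmbEquiv.symm K) p.cols) * X (MinorIndex.ofSets p.rows K)

variable (φ : Matrix (Fin n') (Fin n) k)

theorem minorPresentation_minorSubst (f : MvPolynomial (MinorIndex t m n) k) :
    minorPresentation k t m n' (minorSubst t m φ f) =
      columnSubst (Fin m) φ (minorPresentation k t m n f) := by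
  refine AlgHom.congr_fun (φ₁ := (minorPresentation k t m n').comp (minorSubst t m φ))
    (φ₂ := (columnSubst (Fin m) φ).comp (minorPresentation k t m n)) ?_ f
  ext1 p
  simp only [AlgHom.comp_apply, minorPresentation_X, columnSubst_rowMinor, minorSubst, aeval_X,
    map_sum, map_mul, algHom_C, algebraMap_eq]
  rfl

theorem minorSubst_mem_minorRelations {f : MvPolynomial (MinorIndex t m n) k}
    (hf : f ∈ minorRelations k t m n) : minorSubst t m φ f ∈ minorRelations k t m n' := by
  rw [mem_minorRelations] at hf ⊢
  rw [minorPresentation_minorSubst, hf, map_zero]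

theorem isHomogeneous_minorSubst_X (p : MinorIndex t m n) :
    (minorSubst t m φ (X p)).IsHomogeneous 1 := by
  rw [minorSubst, aeval_X]
  exact IsHomogeneous.sum _ _ _ fun K _ => (isHomogeneous_X k _).C_mul _

theorem isHomogeneous_minorSubst {f : MvPolynomial (MinorIndex t m n) k} {d : ℕ}
    (hf : f.IsHomogeneous d) : (minorSubst t m φ f).IsHomogeneous d := by
  rw [aeval_unique (minorSubst t m φ), ← one_mul d]
  exact hf.aeval _ (isHomogeneous_minorSubst_X φ)

theorem totalDegree_minorSubst_le (f : MvPolynomial (MinorIndex t m n) k) :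
    (minorSubst t m φ f).totalDegree ≤ f.totalDegree := by
  rw [aeval_unique (minorSubst t m φ), ← mul_one f.totalDegree]
  exact totalDegree_aeval_le (fun p => (isHomogeneous_minorSubst_X φ p).totalDegree_le) f

theorem pderiv_minorSubst_X (I : Set.powersetCard (Fin m) t) (K : Set.powersetCard (Fin n') t)
    (p : MinorIndex t m n) :
    pderiv (MinorIndex.ofSets I K) (minorSubst t m φ (X p)) =
      if p.rows = I then C (rowMinor φ (ofFinEmbEquiv.symm K) p.cols) else 0 := by
  classical
  simp only [minorSubst, aeval_X, map_sum, pderiv_C_mul, pderiv_X, Pi.single_apply,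
    MinorIndex.eq_ofSets_iff, MinorIndex.rows_ofSets, MinorIndex.cols_ofSets]
  split_ifs with h <;> simp [h]

theorem pderiv_minorSubst (I : Set.powersetCard (Fin m) t) (K : Set.powersetCard (Fin n') t)
    (f : MvPolynomial (MinorIndex t m n) k) :
    pderiv (MinorIndex.ofSets I K) (minorSubst t m φ f) =
      ∑ J : Set.powersetCard (Fin n) t, C (rowMinor φ (ofFinEmbEquiv.symm K) J) *
        minorSubst t m φ (pderiv (MinorIndex.ofSets I J) f) := by
  classical
  induction f using MvPolynomial.induction_on with
  | C r => simp
  | add f g hf hg => simp only [map_add, hf, hg, mul_add, Finset.sum_add_distrib]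
  | mul_X f p hf =>
    have on_X : pderiv (MinorIndex.ofSets I K) (minorSubst t m φ (X p)) =
        ∑ J : Set.powersetCard (Fin n) t, C (rowMinor φ (ofFinEmbEquiv.symm K) J) *
          minorSubst t m φ (pderiv (MinorIndex.ofSets I J) (X p)) := by
      rw [pderiv_minorSubst_X]
      simp only [pderiv_X, Pi.single_apply, MinorIndex.eq_ofSets_iff]
      split_ifs with h <;> simp [h]
    rw [map_mul, Derivation.leibniz, hf, on_X]
    simp only [Derivation.leibniz, smul_eq_mul, map_add, map_mul, Finset.mul_sum,
      ← Finset.sum_add_distrib]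
    exact Finset.sum_congr rfl fun J _ => by ring

end MinorPresentation

section Polarization

variable {k : Type*} [CommRing k] {t m n n' : ℕ}

/-- The polarization of `f` along the row set `I`: in the differential of `f`, evaluated at the
minors of the generic matrix, `dy_{I',J}` is replaced by `0` if `I' ≠ I` and by the minor of `t` new
generic rows on the columns `J` if `I' = I`. The new rows are the rows `Sum.inr a`. -/
noncomputable def polarization (k : Type*) [CommRing k] (n : ℕ) (I : Set.powersetCard (Fin m) t) :
    MvPolynomial (MinorIndex t m n) k →ₗ[k] MvPolynomial ((Fin m ⊕ Fin t) × Fin n) k where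
  toFun f := ∑ J : Set.powersetCard (Fin n) t,
    rowMinor (mvPolynomialX (Fin m ⊕ Fin t) (Fin n) k) Sum.inr J *
      rename (Prod.map Sum.inl id) (minorPresentation k t m n (pderiv (MinorIndex.ofSets I J) f))
  map_add' f g := by simp only [map_add, mul_add, Finset.sum_add_distrib]
  map_smul' r f := by simp [Finset.smul_sum]

theorem polarization_apply (I : Set.powersetCard (Fin m) t)
    (f : MvPolynomial (MinorIndex t m n) k) :
    polarization k n I f = ∑ J : Set.powersetCard (Fin n) t,
      rowMinor (mvPolynomialX (Fin m ⊕ Fin t) (Fin n) k) Sum.inr J *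
        rename (Prod.map Sum.inl id)
          (minorPresentation k t m n (pderiv (MinorIndex.ofSets I J) f)) :=
  rfl

theorem isHomogeneous_polarization (I : Set.powersetCard (Fin m) t)
    {f : MvPolynomial (MinorIndex t m n) k} {d : ℕ} (hf : f.IsHomogeneous d) :
    (polarization k n I f).IsHomogeneous (t + t * (d - 1)) :=
  IsHomogeneous.sum _ _ _ fun J _ => (isHomogeneous_rowMinor_mvPolynomialX Sum.inr J).mul
    (isHomogeneous_minorPresentation hf.pderiv).rename_isHomogeneous

theorem polarization_minorSubst (I : Set.powersetCard (Fin m) t) (φ : Matrix (Fin n') (Fin n) k)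
    (f : MvPolynomial (MinorIndex t m n) k) :
    polarization k n' I (minorSubst t m φ f) =
      columnSubst (Fin m ⊕ Fin t) φ (polarization k n I f) := by
  simp only [polarization_apply, pderiv_minorSubst, map_sum, map_mul, algHom_C, algebraMap_eq,
    minorPresentation_minorSubst, columnSubst_rowMinor, columnSubst_rename_rows, Finset.mul_sum,
    Finset.sum_mul]
  rw [Finset.sum_comm]
  exact Finset.sum_congr rfl fun J _ => Finset.sum_congr rfl fun K _ => by ring

theorem pderiv_mem_minorRelations_of_polarization_eq_zero {I : Set.powersetCard (Fin m) t}
    {f : MvPolynomial (MinorIndex t m n) k} (hf : polarization k n I f = 0)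
    (J : Set.powersetCard (Fin n) t) :
    pderiv (MinorIndex.ofSets I J) f ∈ minorRelations k t m n := by
  let specialize : MvPolynomial ((Fin m ⊕ Fin t) × Fin n) k →ₐ[k] MvPolynomial (Fin m × Fin n) k :=
    aeval fun x => x.1.elim (fun i => X (i, x.2))
      fun a => (1 : Matrix _ _ _) (ofFinEmbEquiv.symm J a) x.2
  have specialize_rename (g : MvPolynomial (Fin m × Fin n) k) :
      specialize (rename (Prod.map Sum.inl id) g) = g := by
    rw [aeval_rename]
    exact aeval_X_left_apply g
  have specialize_rowMinor (K : Set.powersetCard (Fin n) t) :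
      specialize (rowMinor (mvPolynomialX (Fin m ⊕ Fin t) (Fin n) k) Sum.inr K) =
        if J = K then 1 else 0 := by
    rw [← rowMinor_one]
    refine (map_rowMinor specialize.toRingHom _ _ _).trans (congrArg det ?_)
    ext1 a b
    exact aeval_X _ _
  have specialized := congrArg specialize hf
  rw [mem_minorRelations]
  simpa [polarization_apply, specialize_rename, specialize_rowMinor] using specialized

end Polarization

section Generation

theorem exists_finsupp_pderiv_sub_mem_minorRelations (k : Type*) [CommRing k] [Algebra ℚ k]
    (t m n d : ℕ) :
    ∃ c : (Matrix (Fin n) (Fin (m + t)) ℚ × Matrix (Fin (m + t)) (Fin n) ℚ) →₀ ℚ,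
      ∀ f : MvPolynomial (MinorIndex t m n) k, f.IsHomogeneous d → ∀ p,
        pderiv p (f - c.sum fun φ r => r • minorSubst t m (φ.1.map (algebraMap ℚ k))
          (minorSubst t m (φ.2.map (algebraMap ℚ k)) f)) ∈ minorRelations k t m n := by
  obtain ⟨c, hc⟩ := exists_finsupp_sum_smul_columnSubst (K := ℚ) (ν := Fin n) k
    (finSumFinEquiv (m := m) (n := t)) (t + t * (d - 1))
  refine ⟨c, fun f hf p => ?_⟩
  have polarization_eq_zero : polarization k n p.rows (f - c.sum fun φ r =>
      r • minorSubst t m (φ.1.map (algebraMap ℚ k))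
        (minorSubst t m (φ.2.map (algebraMap ℚ k)) f)) = 0 := by
    have fixed := hc _ (isHomogeneous_polarization p.rows hf)
    simp only [Finsupp.sum, map_sub, map_sum, LinearMap.map_smul_of_tower,
      polarization_minorSubst, sub_eq_zero] at fixed ⊢
    exact fixed.symm
  exact pderiv_mem_minorRelations_of_polarization_eq_zero polarization_eq_zero p.cols

theorem minorSubst_mem_span_of_generatedInDegreesLE {k : Type*} [CommRing k]
    {t m n n' D : ℕ} (h : GeneratedInDegreesLE (minorRelations k t m n) D)
    (φ : Matrix (Fin n') (Fin n) k) {f : MvPolynomial (MinorIndex t m n) k}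
    (hf : f ∈ minorRelations k t m n) :
    minorSubst t m φ f ∈ Ideal.span {x | x ∈ minorRelations k t m n' ∧ x.totalDegree ≤ D} := by
  rw [h] at hf
  refine (Ideal.span_le.2 ?_ : Ideal.span _ ≤ (Ideal.span _).comap (minorSubst t m φ)) hf
  rintro g ⟨hg, hgD⟩
  exact Ideal.subset_span
    ⟨minorSubst_mem_minorRelations φ hg, (totalDegree_minorSubst_le φ g).trans hgD⟩

theorem mem_span_of_isHomogeneous_of_mem_minorRelations {k : Type*} [CommRing k] [Algebra ℚ k]
    {t m n D : ℕ} (h : GeneratedInDegreesLE (minorRelations k t m (m + t)) D) {d : ℕ}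
    {f : MvPolynomial (MinorIndex t m n) k} (hf : f.IsHomogeneous d)
    (hfJ : f ∈ minorRelations k t m n) :
    f ∈ Ideal.span {x | x ∈ minorRelations k t m n ∧ x.totalDegree ≤ D} := by
  induction d generalizing f with
  | zero => exact Ideal.subset_span ⟨hfJ, hf.totalDegree_le.trans D.zero_le⟩
  | succ d ih =>
    obtain ⟨c, hc⟩ := exists_finsupp_pderiv_sub_mem_minorRelations k t m n (d + 1)
    set g := c.sum fun φ r => r • minorSubst t m (φ.1.map (algebraMap ℚ k))
      (minorSubst t m (φ.2.map (algebraMap ℚ k)) f)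
    have hg : g.IsHomogeneous (d + 1) :=
      (homogeneousSubmodule _ k (d + 1)).sum_mem fun φ _ => Submodule.smul_of_tower_mem _ _
        (isHomogeneous_minorSubst _ (isHomogeneous_minorSubst _ hf))
    have g_mem : g ∈ Ideal.span {x | x ∈ minorRelations k t m n ∧ x.totalDegree ≤ D} :=
      Ideal.sum_mem _ fun φ _ => Submodule.smul_of_tower_mem _ _
        (minorSubst_mem_span_of_generatedInDegreesLE h _ (minorSubst_mem_minorRelations _ hfJ))
    rw [← Submodule.sub_mem_iff_left _ g_mem]
    exact mem_of_forall_pderiv_mem d.succ_ne_zero (hf.sub hg) fun p =>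
      ih (hf.sub hg).pderiv (hc f hf p)

theorem minorRelations_degree_bound_from_square_general (k : Type*) [CommRing k] [Algebra ℚ k]
    (t m n D : ℕ) (ht : 1 ≤ t) (h : GeneratedInDegreesLE (minorRelations k t m (m + t)) D) :
    GeneratedInDegreesLE (minorRelations k t m n) D := by
  refine le_antisymm (fun f hf => ?_) (Ideal.span_le.2 fun f hf => hf.1)
  rw [← sum_homogeneousComponent f]
  exact Ideal.sum_mem _ fun d _ => mem_span_of_isHomogeneous_of_mem_minorRelations h
    (homogeneousComponent_isHomogeneous d f)
    (homogeneousComponent_mem_minorRelations (Nat.one_le_iff_ne_zero.1 ht) hf d)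

end Generation

/-- If the ideal of relations of the `t`-minors of a generic `m × (m+t)` matrix is
generated in degrees `≤ D`, then so is the ideal of relations of the `t`-minors of a
generic `m × n` matrix, for any `n ≥ m`. -/
theorem minorRelations_degree_bound_from_square (k : Type*) [Field k] [CharZero k]
    (t m n D : ℕ) (ht : 1 ≤ t) (htm : t ≤ m) (hmn : m ≤ n) (hD : 2 ≤ D)
    (h : GeneratedInDegreesLE (minorRelations k t m (m + t)) D) :
    GeneratedInDegreesLE (minorRelations k t m n) D :=
  minorRelations_degree_bound_from_square_general k t m n D ht h
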